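/- arXiv:2204.00760 — 5 statements merged into one kernel-verified Lean document; each statement's English description precedes it below -/
import Mathlib

section
/- Let 0 < b < 1, a > 0, c ∈ ℝ, and let γ₀(t) = (a cos t, a sin t). Define the Randers length of an admissible closed curve γ = (x¹, x²) by L(γ) = ∫₀^{2π} (‖γ'(t)‖ + b(cos c · ẋ¹(t) + sin c · ẋ²(t))) dt. Then γ₀ is a strong local maximizer of the signed area among admissible closed curves of the same Randers length: there exists ε > 0 such that every admissible closed curve γ : [0,2π] → ℝ² with sup_{t∈[0,2π]} ‖γ(t) − γ₀(t)‖ < ε and L(γ) = L(γ₀) = 2πa satisfies A(γ) ≤ A(γ₀) = πa². -/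
/-!
The linear part of the Randers metric is an exact form, so it integrates to zero along a closed
curve: `randersLength b c γ` is the Euclidean length `ℓ` of `γ`, and the claim is the isoperimetric
inequality. It holds without any closeness assumption, so `ε = 1` works.

The isoperimetric inequality is proved by E. Schmidt's argument, which needs no reparametrisation.
Let `[m - r, m + r]` be the range of the first coordinate `x` of `γ = (x, y)`, and put
`X = x - m`. The two parameters at which `X = ± r` cut the curve into two arcs. For the disc of
radius `r`, let `g = √(r² - X²)` and let `τ = 1` on one arc, `τ = -1` on the other. By
Cauchy-Schwarz, `X y' + τ g X' ≤ √(X² + g²) ‖γ'‖ = r ‖γ'‖`. Integrating, `∫ X y'` is the signed area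
and the arcs contribute the two halves of the area of the disc, whence `A(γ) + π r² ≤ r ℓ`
(`signedArea_add_le`). With `ℓ = 2πa` this gives `A(γ) ≤ πa² - π(a - r)² ≤ πa²`.
-/

/-!
Statement 1: In the Randers plane `F = √((dx¹)²+(dx²)²) + b(cos c dx¹ + sin c dx²)`
(the case `θ ≡ c`), the circle `γ₀(t) = (a cos t, a sin t)` is a strong local maximizer
of the signed area among admissible closed curves of the same Randers length.
-/

/-- Euclidean norm of a vector of `ℝ × ℝ`. -/
noncomputable def enorm2 (v : ℝ × ℝ) : ℝ := Real.sqrt (v.1 ^ 2 + v.2 ^ 2)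

/-- An admissible closed curve: continuous on `[0, 2π]`, closed, and piecewise
continuously differentiable with respect to some partition of `[0, 2π]`. -/
def IsAdmissible (γ : ℝ → ℝ × ℝ) : Prop :=
  ContinuousOn γ (Set.Icc 0 (2 * Real.pi)) ∧ γ 0 = γ (2 * Real.pi) ∧
  ∃ (k : ℕ) (p : ℕ → ℝ), 0 < k ∧ p 0 = 0 ∧ p k = 2 * Real.pi ∧
    (∀ i < k, p i < p (i + 1)) ∧
    (∀ i < k, ContDiffOn ℝ 1 γ (Set.Icc (p i) (p (i + 1))))

/-- The signed area enclosed by a closed curve `γ = (x¹, x²)`: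
`A(γ) = (1/2) ∫₀^{2π} (x¹ ẋ² − x² ẋ¹) dt`. -/
noncomputable def signedArea (γ : ℝ → ℝ × ℝ) : ℝ :=
  (1 / 2) * ∫ t in (0 : ℝ)..(2 * Real.pi),
    ((γ t).1 * (deriv γ t).2 - (γ t).2 * (deriv γ t).1)

/-- The Randers length `L(γ) = ∫₀^{2π} (‖γ'(t)‖ + b(cos c · ẋ¹ + sin c · ẋ²)) dt`. -/
noncomputable def randersLength (b c : ℝ) (γ : ℝ → ℝ × ℝ) : ℝ :=
  ∫ t in (0 : ℝ)..(2 * Real.pi),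
    (enorm2 (deriv γ t) +
      b * (Real.cos c * (deriv γ t).1 + Real.sin c * (deriv γ t).2))

open MeasureTheory Set

lemma continuous_enorm2 : Continuous enorm2 := by
  unfold enorm2; fun_prop

/-! ### Piecewise differentiable curves -/

/-- A point strictly between the ends of a finite sequence is either a term of it or lies in one of
the open gaps. -/
lemma exists_mem_Ioo_of_partition (p : ℕ → ℝ) (k : ℕ) (t : ℝ) (h0 : p 0 < t) (hk : t < p k)
    (ht : t ∉ range p) : ∃ i < k, t ∈ Ioo (p i) (p (i + 1)) := by
  induction k with
  | zero => exact absurd h0 hk.not_gt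
  | succ n ih =>
    rcases lt_trichotomy t (p n) with h | h | h
    · obtain ⟨i, hi, hm⟩ := ih h
      exact ⟨i, hi.trans (Nat.lt_succ_self n), hm⟩
    · exact absurd ⟨n, h.symm⟩ ht
    · exact ⟨n, Nat.lt_succ_self n, h, hk⟩

lemma IsAdmissible.exists_countable {γ : ℝ → ℝ × ℝ} (h : IsAdmissible γ) :
    ∃ S : Set ℝ, S.Countable ∧ ∀ t ∈ Ioo 0 (2 * Real.pi) \ S, HasDerivAt γ (deriv γ t) t := by
  obtain ⟨-, -, k, p, -, h0, hk, -, hp⟩ := h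
  refine ⟨range p, countable_range p, fun t ht => ?_⟩
  obtain ⟨i, hi, hm⟩ := exists_mem_Ioo_of_partition p k t (h0 ▸ ht.1.1) (hk ▸ ht.1.2) ht.2
  exact (((hp i hi).differentiableOn one_ne_zero).differentiableAt
    (Icc_mem_nhds hm.1 hm.2)).hasDerivAt

/-- Although `deriv γ` takes junk values at the corners of `γ`, continuous functions of it are
integrable. -/
lemma IsAdmissible.intervalIntegrable {γ : ℝ → ℝ × ℝ} (h : IsAdmissible γ) {F : ℝ × ℝ → ℝ}
    (hF : Continuous F) {α β : ℝ} (hα : α ∈ Icc 0 (2 * Real.pi)) (hβ : β ∈ Icc 0 (2 * Real.pi)) :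
    IntervalIntegrable (fun t => F (deriv γ t)) volume α β := by
  obtain ⟨-, -, k, p, -, h0, hk, hlt, hp⟩ := h
  have key : IntervalIntegrable (fun t => F (deriv γ t)) volume (p 0) (p k) := by
    refine IntervalIntegrable.trans_iterate fun i hi => ?_
    have hc : ContinuousOn (fun t => F (derivWithin γ (Icc (p i) (p (i + 1))) t))
        (Icc (p i) (p (i + 1))) :=
      hF.comp_continuousOn ((hp i hi).continuousOn_derivWithin (uniqueDiffOn_Icc (hlt i hi)) le_rfl)
    refine (hc.intervalIntegrable_of_Icc (hlt i hi).le).congr_uIoo fun t ht => ?_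
    rw [uIoo_of_le (hlt i hi).le] at ht
    simp only [derivWithin_of_mem_nhds (Icc_mem_nhds ht.1 ht.2)]
  rw [h0, hk] at key
  refine key.mono_set ?_
  rw [uIcc_of_le Real.two_pi_pos.le]
  exact uIcc_subset_Icc hα hβ

/-! ### The comparison disc -/

/-- The signed area of the part of the upper half disc of radius `r` over `[0, x]`, extended by a constant
beyond `r` thanks to `√` vanishing on negative numbers. -/
noncomputable def halfDiscArea (r x : ℝ) : ℝ := ∫ s in (0 : ℝ)..x, √(r ^ 2 - s ^ 2)

lemma hasDerivAt_halfDiscArea (r x : ℝ) : HasDerivAt (halfDiscArea r) (√(r ^ 2 - x ^ 2)) x :=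
  (Continuous.integral_hasStrictDerivAt (f := fun s : ℝ => √(r ^ 2 - s ^ 2))
    (by fun_prop) 0 x).hasDerivAt

lemma halfDiscArea_sub (r : ℝ) (hr : 0 ≤ r) :
    halfDiscArea r r - halfDiscArea r (-r) = Real.pi * r ^ 2 / 2 := by
  have hc : Continuous fun s : ℝ => √(r ^ 2 - s ^ 2) := by fun_prop
  unfold halfDiscArea
  rw [intervalIntegral.integral_interval_sub_left (hc.intervalIntegrable _ _)
    (hc.intervalIntegrable _ _)]
  have h1 := intervalIntegral.mul_integral_comp_mul_left (a := -1) (b := 1)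
    (f := fun s : ℝ => √(r ^ 2 - s ^ 2)) (c := r)
  have h2 : ∀ x : ℝ, √(r ^ 2 - (r * x) ^ 2) = r * √(1 - x ^ 2) := fun x => by
    rw [show r ^ 2 - (r * x) ^ 2 = r ^ 2 * (1 - x ^ 2) by ring, Real.sqrt_mul (sq_nonneg r),
      Real.sqrt_sq hr]
  simp only [h2, intervalIntegral.integral_const_mul, integral_sqrt_one_sub_sq, mul_neg,
    mul_one] at h1
  rw [← h1]; ring

/-- Cauchy-Schwarz for the outward normal `(X, τ g)` of the circle of radius `r`. -/
lemma mul_add_mul_le_enorm2 {X r τ u v : ℝ} (hr : 0 ≤ r) (hX : |X| ≤ r) (hτ : τ ^ 2 = 1) :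
    X * v + τ * (√(r ^ 2 - X ^ 2) * u) ≤ r * enorm2 (u, v) := by
  have hX2 : X ^ 2 ≤ r ^ 2 := sq_le_sq' (by linarith [(abs_le.1 hX).1]) (abs_le.1 hX).2
  have hg := Real.sq_sqrt (sub_nonneg.2 hX2)
  set g := √(r ^ 2 - X ^ 2)
  unfold enorm2
  have hn := Real.sq_sqrt (add_nonneg (sq_nonneg u) (sq_nonneg v))
  refine (le_abs_self _).trans (abs_le_of_sq_le_sq ?_ (by positivity))
  rw [mul_pow, hn]
  have e : r ^ 2 * (u ^ 2 + v ^ 2) - (X * v + τ * (g * u)) ^ 2 = (X * u - τ * g * v) ^ 2 := by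
    linear_combination (-(u ^ 2 + v ^ 2)) * hg - (g ^ 2 * u ^ 2 + g ^ 2 * v ^ 2) * hτ
  nlinarith [sq_nonneg (X * u - τ * g * v)]

/-! ### Isoperimetric inequality -/

section Arc

variable {γ : ℝ → ℝ × ℝ}

lemma IsAdmissible.arc_le (h : IsAdmissible γ) {m r τ α β : ℝ} (hr : 0 ≤ r) (hτ : τ ^ 2 = 1)
    (hX : ∀ t ∈ Icc 0 (2 * Real.pi), |(γ t).1 - m| ≤ r)
    (hα : α ∈ Icc 0 (2 * Real.pi)) (hβ : β ∈ Icc 0 (2 * Real.pi)) (hαβ : α ≤ β) :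
    (∫ t in α..β, ((γ t).1 - m) * (deriv γ t).2)
      + τ * (halfDiscArea r ((γ β).1 - m) - halfDiscArea r ((γ α).1 - m))
      ≤ r * ∫ t in α..β, enorm2 (deriv γ t) := by
  have hsub : Icc α β ⊆ Icc 0 (2 * Real.pi) := Icc_subset_Icc hα.1 hβ.2
  have hcX : ContinuousOn (fun t => (γ t).1 - m) (Icc α β) :=
    (continuous_fst.comp_continuousOn (h.1.mono hsub)).sub continuousOn_const
  have hcX' := hcX
  rw [← uIcc_of_le hαβ] at hcX'
  have i1 : IntervalIntegrable (fun t => ((γ t).1 - m) * (deriv γ t).2) volume α β :=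
    (h.intervalIntegrable continuous_snd hα hβ).continuousOn_mul hcX'
  have i2 : IntervalIntegrable (fun t => √(r ^ 2 - ((γ t).1 - m) ^ 2) * (deriv γ t).1)
      volume α β :=
    (h.intervalIntegrable continuous_fst hα hβ).continuousOn_mul
      (Real.continuous_sqrt.comp_continuousOn (continuousOn_const.sub (hcX'.pow 2)))
  have i3 := h.intervalIntegrable continuous_enorm2 hα hβ
  obtain ⟨S, hS, hd⟩ := h.exists_countable
  have ftc : ∫ t in α..β, √(r ^ 2 - ((γ t).1 - m) ^ 2) * (deriv γ t).1
      = halfDiscArea r ((γ β).1 - m) - halfDiscArea r ((γ α).1 - m) := by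
    refine integral_eq_of_hasDerivAt_off_countable_of_le
      (fun t => halfDiscArea r ((γ t).1 - m)) _ hαβ hS ?_ (fun t ht => ?_) i2
    · have : Continuous (halfDiscArea r) :=
        continuous_iff_continuousAt.2 fun x => (hasDerivAt_halfDiscArea r x).continuousAt
      exact this.comp_continuousOn hcX
    · have := hd t ⟨⟨hα.1.trans_lt ht.1.1, ht.1.2.trans_le hβ.2⟩, ht.2⟩
      exact (hasDerivAt_halfDiscArea r _).comp t (this.fst.sub_const m)
  rw [← ftc, ← intervalIntegral.integral_const_mul, ← intervalIntegral.integral_const_mul,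
    ← intervalIntegral.integral_add i1 (i2.const_mul τ)]
  refine intervalIntegral.integral_mono_on hαβ (i1.add (i2.const_mul τ)) (i3.const_mul r)
    fun t ht => ?_
  exact mul_add_mul_le_enorm2 hr (hX t (hsub ht)) hτ

lemma IsAdmissible.integral_deriv_fst (h : IsAdmissible γ) :
    ∫ t in (0 : ℝ)..(2 * Real.pi), (deriv γ t).1 = 0 := by
  obtain ⟨S, hS, hd⟩ := h.exists_countable
  have h0 : (0 : ℝ) ≤ 2 * Real.pi := Real.two_pi_pos.le
  rw [integral_eq_of_hasDerivAt_off_countable_of_le (fun t => (γ t).1) _ h0 hS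
    (continuous_fst.comp_continuousOn h.1) (fun t ht => (hd t ht).fst)
    (h.intervalIntegrable continuous_fst ⟨le_rfl, h0⟩ ⟨h0, le_rfl⟩), h.2.1, sub_self]

lemma IsAdmissible.integral_deriv_snd (h : IsAdmissible γ) :
    ∫ t in (0 : ℝ)..(2 * Real.pi), (deriv γ t).2 = 0 := by
  obtain ⟨S, hS, hd⟩ := h.exists_countable
  have h0 : (0 : ℝ) ≤ 2 * Real.pi := Real.two_pi_pos.le
  rw [integral_eq_of_hasDerivAt_off_countable_of_le (fun t => (γ t).2) _ h0 hS
    (continuous_snd.comp_continuousOn h.1) (fun t ht => (hd t ht).snd)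
    (h.intervalIntegrable continuous_snd ⟨le_rfl, h0⟩ ⟨h0, le_rfl⟩), h.2.1, sub_self]

lemma IsAdmissible.randersLength_eq (h : IsAdmissible γ) (b c : ℝ) :
    randersLength b c γ = ∫ t in (0 : ℝ)..(2 * Real.pi), enorm2 (deriv γ t) := by
  have h0 : (0 : ℝ) ≤ 2 * Real.pi := Real.two_pi_pos.le
  have l : (0 : ℝ) ∈ Icc 0 (2 * Real.pi) := ⟨le_rfl, h0⟩
  have u : 2 * Real.pi ∈ Icc 0 (2 * Real.pi) := ⟨h0, le_rfl⟩
  have i1 := h.intervalIntegrable continuous_fst l u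
  have i2 := h.intervalIntegrable continuous_snd l u
  unfold randersLength
  rw [intervalIntegral.integral_add (h.intervalIntegrable continuous_enorm2 l u)
      (((i1.const_mul _).add (i2.const_mul _)).const_mul b),
    intervalIntegral.integral_const_mul,
    intervalIntegral.integral_add (i1.const_mul _) (i2.const_mul _),
    intervalIntegral.integral_const_mul, intervalIntegral.integral_const_mul,
    h.integral_deriv_fst, h.integral_deriv_snd]
  ring

lemma IsAdmissible.signedArea_eq (h : IsAdmissible γ) (m : ℝ) :
    signedArea γ = ∫ t in (0 : ℝ)..(2 * Real.pi), ((γ t).1 - m) * (deriv γ t).2 := by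
  have h0 : (0 : ℝ) ≤ 2 * Real.pi := Real.two_pi_pos.le
  have l : (0 : ℝ) ∈ Icc 0 (2 * Real.pi) := ⟨le_rfl, h0⟩
  have u : 2 * Real.pi ∈ Icc 0 (2 * Real.pi) := ⟨h0, le_rfl⟩
  have i1 := h.intervalIntegrable continuous_fst l u
  have i2 := h.intervalIntegrable continuous_snd l u
  have hc := h.1
  have cx : ContinuousOn (fun t => (γ t).1) (Icc 0 (2 * Real.pi)) :=
    continuous_fst.comp_continuousOn hc
  have cy : ContinuousOn (fun t => (γ t).2) (Icc 0 (2 * Real.pi)) :=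
    continuous_snd.comp_continuousOn hc
  have j1 : IntervalIntegrable (fun t => (γ t).2 * (deriv γ t).1) volume 0 (2 * Real.pi) :=
    i1.continuousOn_mul (by rwa [uIcc_of_le h0])
  have j2 : IntervalIntegrable (fun t => (γ t).1 * (deriv γ t).2) volume 0 (2 * Real.pi) :=
    i2.continuousOn_mul (by rwa [uIcc_of_le h0])
  obtain ⟨S, hS, hd⟩ := h.exists_countable
  -- Integration by parts: `∫ (x y)' = 0` since the curve is closed.
  have ftc : ∫ t in (0 : ℝ)..(2 * Real.pi), ((γ t).2 * (deriv γ t).1 + (γ t).1 * (deriv γ t).2)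
      = 0 := by
    rw [integral_eq_of_hasDerivAt_off_countable_of_le (fun t => (γ t).1 * (γ t).2) _ h0 hS
      (cx.mul cy) (fun t ht => ?_) (j1.add j2), h.2.1, sub_self]
    have d1 : HasDerivAt (fun t => (γ t).1) (deriv γ t).1 t := (hd t ht).fst
    have d2 : HasDerivAt (fun t => (γ t).2) (deriv γ t).2 t := (hd t ht).snd
    have d12 := d1.mul d2
    rwa [mul_comm (deriv γ t).1] at d12
  rw [intervalIntegral.integral_add j1 j2] at ftc
  unfold signedArea
  simp only [sub_mul]
  rw [intervalIntegral.integral_sub j2 j1, intervalIntegral.integral_sub j2 (i2.const_mul m),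
    intervalIntegral.integral_const_mul, h.integral_deriv_snd]
  linarith

/-- Schmidt's inequality when the extreme values of the first coordinate are `m - τ r`, attained at
`α`, and `m + τ r`, attained at `β`, with `α ≤ β`. The sign `τ` records which extreme comes
first. -/
lemma IsAdmissible.signedArea_add_le_of_le (h : IsAdmissible γ) {m r τ α β : ℝ} (hr : 0 ≤ r)
    (hτ : τ = 1 ∨ τ = -1) (hX : ∀ t ∈ Icc 0 (2 * Real.pi), |(γ t).1 - m| ≤ r)
    (hα : α ∈ Icc 0 (2 * Real.pi)) (hβ : β ∈ Icc 0 (2 * Real.pi)) (hαβ : α ≤ β)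
    (eα : (γ α).1 - m = -(τ * r)) (eβ : (γ β).1 - m = τ * r) :
    signedArea γ + Real.pi * r ^ 2 ≤ r * ∫ t in (0 : ℝ)..(2 * Real.pi), enorm2 (deriv γ t) := by
  have h0 : (0 : ℝ) ≤ 2 * Real.pi := Real.two_pi_pos.le
  have l : (0 : ℝ) ∈ Icc 0 (2 * Real.pi) := ⟨le_rfl, h0⟩
  have u : 2 * Real.pi ∈ Icc 0 (2 * Real.pi) := ⟨h0, le_rfl⟩
  have hτ2 : τ ^ 2 = 1 := by rcases hτ with rfl | rfl <;> norm_num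
  have a1 := h.arc_le (τ := -τ) hr (by rw [neg_sq, hτ2]) hX l hα hα.1
  have a2 := h.arc_le hr hτ2 hX hα hβ hαβ
  have a3 := h.arc_le (τ := -τ) hr (by rw [neg_sq, hτ2]) hX hβ u hβ.2
  have hI : ∀ {α β : ℝ}, α ∈ Icc 0 (2 * Real.pi) → β ∈ Icc 0 (2 * Real.pi) →
      IntervalIntegrable (fun t => ((γ t).1 - m) * (deriv γ t).2) volume α β := fun ha hb =>
    (h.intervalIntegrable continuous_snd ha hb).continuousOn_mul
      (((continuous_fst.comp_continuousOn h.1).sub continuousOn_const).mono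
        (uIcc_subset_Icc ha hb))
  have hJ : ∀ {α β : ℝ}, α ∈ Icc 0 (2 * Real.pi) → β ∈ Icc 0 (2 * Real.pi) →
      IntervalIntegrable (fun t => enorm2 (deriv γ t)) volume α β :=
    h.intervalIntegrable continuous_enorm2
  rw [h.signedArea_eq m,
    ← intervalIntegral.integral_add_adjacent_intervals (hI l hα) (hI hα u),
    ← intervalIntegral.integral_add_adjacent_intervals (hI hα hβ) (hI hβ u),
    ← intervalIntegral.integral_add_adjacent_intervals (hJ l hα) (hJ hα u),
    ← intervalIntegral.integral_add_adjacent_intervals (hJ hα hβ) (hJ hβ u)]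
  have hG : τ * (halfDiscArea r (τ * r) - halfDiscArea r (-(τ * r))) = Real.pi * r ^ 2 / 2 := by
    have := halfDiscArea_sub r hr
    rcases hτ with rfl | rfl
    · simpa using this
    · simp only [neg_mul, one_mul, neg_neg]; linarith
  rw [h.2.1] at a1
  rw [eα] at a1 a2
  rw [eβ] at a2 a3
  linarith

/-- Schmidt's inequality; `r` is half the width of the curve in the direction of the first
coordinate. -/
lemma IsAdmissible.signedArea_add_le (h : IsAdmissible γ) :
    ∃ r : ℝ, signedArea γ + Real.pi * r ^ 2
      ≤ r * ∫ t in (0 : ℝ)..(2 * Real.pi), enorm2 (deriv γ t) := by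
  have hne : (Icc 0 (2 * Real.pi)).Nonempty := nonempty_Icc.2 Real.two_pi_pos.le
  have cx : ContinuousOn (fun t => (γ t).1) (Icc 0 (2 * Real.pi)) :=
    continuous_fst.comp_continuousOn h.1
  obtain ⟨α, hα, mα⟩ := isCompact_Icc.exists_isMinOn hne cx
  obtain ⟨β, hβ, mβ⟩ := isCompact_Icc.exists_isMaxOn hne cx
  have hmin : ∀ t ∈ Icc 0 (2 * Real.pi), (γ α).1 ≤ (γ t).1 := fun t ht => mα ht
  have hmax : ∀ t ∈ Icc 0 (2 * Real.pi), (γ t).1 ≤ (γ β).1 := fun t ht => mβ ht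
  have hr : 0 ≤ ((γ β).1 - (γ α).1) / 2 := by linarith [hmin β hβ]
  have hX : ∀ t ∈ Icc 0 (2 * Real.pi),
      |(γ t).1 - ((γ α).1 + (γ β).1) / 2| ≤ ((γ β).1 - (γ α).1) / 2 := fun t ht =>
    abs_le.2 ⟨by linarith [hmin t ht], by linarith [hmax t ht]⟩
  refine ⟨((γ β).1 - (γ α).1) / 2, ?_⟩
  rcases le_total α β with hab | hab
  · exact h.signedArea_add_le_of_le hr (Or.inl rfl) hX hα hβ hab (by ring) (by ring)
  · exact h.signedArea_add_le_of_le hr (Or.inr rfl) hX hβ hα hab (by ring) (by ring)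

end Arc

/-! ### The circle -/

lemma deriv_circle (a t : ℝ) :
    deriv (fun t => (a * Real.cos t, a * Real.sin t)) t = (-(a * Real.sin t), a * Real.cos t) := by
  have := ((Real.hasDerivAt_cos t).const_mul a).prodMk ((Real.hasDerivAt_sin t).const_mul a)
  simpa using this.deriv

lemma signedArea_circle (a : ℝ) :
    signedArea (fun t => (a * Real.cos t, a * Real.sin t)) = Real.pi * a ^ 2 := by
  have e : ∀ t : ℝ, a * Real.cos t * (a * Real.cos t) - a * Real.sin t * -(a * Real.sin t)
      = a ^ 2 := fun t => by linear_combination a ^ 2 * Real.sin_sq_add_cos_sq t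
  simp only [signedArea, deriv_circle, e, intervalIntegral.integral_const, smul_eq_mul]
  ring

lemma isAdmissible_circle (a : ℝ) :
    IsAdmissible (fun t => (a * Real.cos t, a * Real.sin t)) := by
  refine ⟨by fun_prop, by simp, 1, fun i => i * (2 * Real.pi), one_pos, by simp, by simp,
    fun i _ => ?_, fun i _ => ?_⟩
  · push_cast; nlinarith [Real.pi_pos]
  · exact ((contDiff_const.mul Real.contDiff_cos).prodMk
      (contDiff_const.mul Real.contDiff_sin)).contDiffOn

lemma randersLength_circle (a b c : ℝ) (ha : 0 < a) :
    randersLength b c (fun t => (a * Real.cos t, a * Real.sin t)) = 2 * Real.pi * a := by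
  have e : ∀ t : ℝ, enorm2 (-(a * Real.sin t), a * Real.cos t) = a := fun t => by
    rw [enorm2, show (-(a * Real.sin t), a * Real.cos t).1 ^ 2
        + (-(a * Real.sin t), a * Real.cos t).2 ^ 2 = a ^ 2 by
      linear_combination a ^ 2 * Real.sin_sq_add_cos_sq t, Real.sqrt_sq ha.le]
  rw [(isAdmissible_circle a).randersLength_eq]
  simp only [deriv_circle, e, intervalIntegral.integral_const, smul_eq_mul]
  ring

theorem circle_strong_local_max_randers_theta_const
    (a b c : ℝ) (ha : 0 < a) (hb0 : 0 < b) (hb1 : b < 1) :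
    ∃ ε : ℝ, 0 < ε ∧
      signedArea (fun t => (a * Real.cos t, a * Real.sin t)) = Real.pi * a ^ 2 ∧
      randersLength b c (fun t => (a * Real.cos t, a * Real.sin t)) = 2 * Real.pi * a ∧
      ∀ γ : ℝ → ℝ × ℝ, IsAdmissible γ →
        (∀ t ∈ Set.Icc (0 : ℝ) (2 * Real.pi),
          enorm2 (γ t - (a * Real.cos t, a * Real.sin t)) < ε) →
        randersLength b c γ
          = randersLength b c (fun t => (a * Real.cos t, a * Real.sin t)) →
        signedArea γ ≤ signedArea (fun t => (a * Real.cos t, a * Real.sin t)) := by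
  refine ⟨1, one_pos, signedArea_circle a, randersLength_circle a b c ha, fun γ h _ hL => ?_⟩
  rw [randersLength_circle a b c ha, h.randersLength_eq] at hL
  obtain ⟨r, hr⟩ := h.signedArea_add_le
  rw [hL] at hr
  rw [signedArea_circle]
  nlinarith [mul_nonneg Real.pi_pos.le (sq_nonneg (a - r))]
end

section
/- Let τ : ℝ² → ℝ be a smooth (infinitely differentiable) function whose gradient has constant Euclidean norm, i.e. (∂τ/∂x¹)² + (∂τ/∂x²)² = v for some constant v ≥ 0 at every point of ℝ². Then the partial derivatives ∂τ/∂x¹ and ∂τ/∂x² are constant functions; equivalently, there exist constants b₁, b₂ with b₁² + b₂² = v such that dτ = b₁ dx¹ + b₂ dx² everywhere, i.e. τ(x¹, x²) = b₁ x¹ + b₂ x² + const. -/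
/-!
The gradient `G = (∂₁τ, ∂₂τ)` is constant along each straight line `t ↦ x + t G(x)`: differentiating
`|G|² = v` and using the symmetry of the Hessian gives `DG(y) (G y) = 0` for all `y`, so
`h(t) = G(x + t G(x)) - G(x)` solves the linear equation `h' = -DG(x + t G(x)) h` with `h(0) = 0`,
and Grönwall's inequality forces `h = 0`. If `G(x)` and `G(y)` were linearly independent, the lines
through `x` and `y` would meet, and `G` would take both values at the intersection point. Hence all
gradients are parallel, of the same norm, and by connectedness of the plane they are equal.
-/

/-- A solution of `h' = A(t) h` with `A` continuous and `h 0 = 0` vanishes at positive times. -/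
lemma linear_ode_zero_of_nonneg {E : Type*} [NormedAddCommGroup E] [NormedSpace ℝ E]
    {h : ℝ → E} {A : ℝ → E →L[ℝ] E} (hA : Continuous A)
    (hh : ∀ t, HasDerivAt h (A t (h t)) t) (h0 : h 0 = 0) {T : ℝ} (hT : 0 ≤ T) : h T = 0 := by
  obtain ⟨K, hK⟩ := (isCompact_Icc (a := (0 : ℝ)) (b := T)).exists_bound_of_continuousOn
    hA.continuousOn
  have key := norm_le_gronwallBound_of_norm_deriv_right_le (f := h)
    (f' := fun t => A t (h t)) (δ := 0) (K := K) (ε := 0) (a := 0) (b := T)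
    (fun t _ => (hh t).continuousAt.continuousWithinAt)
    (fun t _ => (hh t).hasDerivWithinAt) (by simp [h0])
    (fun t ht => by
      have := (A t).le_of_opNorm_le (hK t ⟨ht.1, ht.2.le⟩) (h t)
      simpa using this) T ⟨hT, le_rfl⟩
  simpa [gronwallBound_ε0] using key

lemma linear_ode_zero {E : Type*} [NormedAddCommGroup E] [NormedSpace ℝ E]
    {h : ℝ → E} {A : ℝ → E →L[ℝ] E} (hA : Continuous A)
    (hh : ∀ t, HasDerivAt h (A t (h t)) t) (h0 : h 0 = 0) (T : ℝ) : h T = 0 := by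
  rcases le_total 0 T with hT | hT
  · exact linear_ode_zero_of_nonneg hA hh h0 hT
  · have := linear_ode_zero_of_nonneg (h := fun t => h (-t)) (A := fun t => -A (-t))
      (by fun_prop)
      (fun t => by
        have := (hh (-t)).scomp t (hasDerivAt_neg t)
        simpa [Function.comp_def] using this)
      (by simpa using h0) (T := -T) (by linarith)
    simpa using this

/-- A `C¹` vector field `G` with `DG(y) (G y) = 0` is constant along the lines it spans. -/
lemma const_along_lines {E : Type*} [NormedAddCommGroup E] [NormedSpace ℝ E]
    {G : E → E} (hG : ContDiff ℝ 1 G) (hz : ∀ y, fderiv ℝ G y (G y) = 0) (x : E) (t : ℝ) :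
    G (x + t • G x) = G x := by
  have hc : Continuous (fderiv ℝ G) := hG.continuous_fderiv one_ne_zero
  have key := linear_ode_zero (h := fun t : ℝ => G (x + t • G x) - G x)
    (A := fun t => -fderiv ℝ G (x + t • G x)) (by fun_prop)
    (fun t => by
      have h1 : HasDerivAt (fun t : ℝ => x + t • G x) (G x) t := by
        simpa using ((hasDerivAt_id t).smul_const (G x)).const_add x
      have h2 := ((hG.differentiable one_ne_zero
        (x + t • G x)).hasFDerivAt.comp_hasDerivAt t h1).sub_const (G x)
      refine h2.congr_deriv ?_
      rw [neg_apply, map_sub, hz, zero_sub, neg_neg])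
    (by simp) t
  exact sub_eq_zero.mp key

theorem eikonal_on_plane_implies_affine
    (τ : ℝ × ℝ → ℝ) (v : ℝ) (hv : 0 ≤ v) (hτ : ContDiff ℝ (⊤ : ℕ∞) τ)
    (heik : ∀ x : ℝ × ℝ,
      (fderiv ℝ τ x (1, 0)) ^ 2 + (fderiv ℝ τ x (0, 1)) ^ 2 = v) :
    ∃ b₁ b₂ C : ℝ, b₁ ^ 2 + b₂ ^ 2 = v ∧
      (∀ x : ℝ × ℝ, fderiv ℝ τ x (1, 0) = b₁ ∧ fderiv ℝ τ x (0, 1) = b₂) ∧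
      (∀ x : ℝ × ℝ, τ x = b₁ * x.1 + b₂ * x.2 + C) := by
  have hτ2 : ContDiff ℝ 2 τ := contDiff_infty.mp hτ 2
  have hD : ContDiff ℝ 1 (fderiv ℝ τ) := hτ2.fderiv_right (by norm_num)
  set p : ℝ × ℝ → ℝ := fun x => fderiv ℝ τ x (1, 0) with hp
  set q : ℝ × ℝ → ℝ := fun x => fderiv ℝ τ x (0, 1) with hq
  have hpC : ContDiff ℝ 1 p := hD.clm_apply contDiff_const
  have hqC : ContDiff ℝ 1 q := hD.clm_apply contDiff_const
  have heik' : ∀ x, p x ^ 2 + q x ^ 2 = v := heik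
  have hdec : ∀ (L : ℝ × ℝ →L[ℝ] ℝ) (a : ℝ × ℝ), L a = a.1 * L (1, 0) + a.2 * L (0, 1) := by
    intro L a
    have : a = a.1 • ((1, 0) : ℝ × ℝ) + a.2 • ((0, 1) : ℝ × ℝ) := by ext <;> simp
    conv_lhs => rw [this]
    simp only [map_add, map_smul, smul_eq_mul]
  have hline : ∀ (x : ℝ × ℝ) (t : ℝ),
      p (x + t • (p x, q x)) = p x ∧ q (x + t • (p x, q x)) = q x := by
    intro x t
    have := const_along_lines (G := fun x => (p x, q x)) (hpC.prodMk hqC) ?_ x t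
    · exact Prod.mk.inj this
    intro y
    have hB := (hD.differentiable one_ne_zero y).hasFDerivAt
    set B := fderiv ℝ (fderiv ℝ τ) y with hBdef
    have hp' : HasFDerivAt p (B.flip (1, 0)) y := by
      simpa using hB.clm_apply (hasFDerivAt_const ((1, 0) : ℝ × ℝ) y)
    have hq' : HasFDerivAt q (B.flip (0, 1)) y := by
      simpa using hB.clm_apply (hasFDerivAt_const ((0, 1) : ℝ × ℝ) y)
    have hsymm : ∀ a b, B a b = B b a := fun a b =>
      (hτ2.contDiffAt (x := y)).isSymmSndFDerivAt (by simp) a b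
    -- The derivative of `p ^ 2 + q ^ 2 = v` in a direction `w`.
    have hdiff : ∀ w, p y * B w (1, 0) + q y * B w (0, 1) = 0 := by
      intro w
      have h1 := (hp'.pow 2).add (hq'.pow 2)
      have h2 : HasFDerivAt (p ^ 2 + q ^ 2) (0 : ℝ × ℝ →L[ℝ] ℝ) y := by
        have : p ^ 2 + q ^ 2 = fun _ => v := funext heik'
        rw [this]
        exact hasFDerivAt_const v y
      have h3 := DFunLike.congr_fun (h1.unique h2) w
      simp at h3
      linarith
    have hBz : ∀ w, B (p y, q y) w = 0 := fun w => by
      rw [hsymm, hdec (B w)]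
      exact hdiff w
    rw [(hp'.prodMk hq').fderiv]
    simp [hBz]
  have hpar : ∀ x y, p x * q y - q x * p y = 0 := by
    intro x y
    by_contra hne
    -- Cramer's rule gives the parameters of the intersection point of the two lines.
    obtain ⟨s, hs⟩ : ∃ s, s * (p x * q y - q x * p y) = (y.1 - x.1) * q y - (y.2 - x.2) * p y :=
      ⟨_, div_mul_cancel₀ _ hne⟩
    obtain ⟨t, ht⟩ : ∃ t, t * (p x * q y - q x * p y) = (y.1 - x.1) * q x - (y.2 - x.2) * p x :=
      ⟨_, div_mul_cancel₀ _ hne⟩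
    have hmeet : x + s • (p x, q x) = y + t • (p y, q y) := by
      ext <;> apply mul_right_cancel₀ hne
      · simp only [Prod.fst_add, Prod.smul_fst, smul_eq_mul]
        linear_combination p x * hs - p y * ht
      · simp only [Prod.snd_add, Prod.smul_snd, smul_eq_mul]
        linear_combination q x * hs - q y * ht
    have h1 := hline x s
    have h2 := hline y t
    rw [hmeet] at h1
    apply hne
    rw [← h1.1, ← h1.2, h2.1, h2.2]
    ring
  have hconst : ∀ x, p x = p 0 ∧ q x = q 0 := by
    -- The inner product of the gradients at `x` and at `0` is `±v`, hence `v` by continuity.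
    have hinner : ∀ x, p x * p 0 + q x * q 0 = v := by
      rcases hv.eq_or_lt with rfl | hpos
      · intro x
        have h1 : p x = 0 := by nlinarith [heik' x, sq_nonneg (p x), sq_nonneg (q x)]
        have h2 : q x = 0 := by nlinarith [heik' x, sq_nonneg (p x), sq_nonneg (q x)]
        simp [h1, h2]
      · have hpc := hpC.continuous
        have hqc := hqC.continuous
        have := isPreconnected_univ.eq_of_sq_eq (f := fun x => p x * p 0 + q x * q 0)
          (g := fun _ => v) (by fun_prop) (by fun_prop)
          (fun x _ => by
            simp only [Pi.pow_apply]
            have e1 := heik' x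
            have e0 := heik' 0
            have e2 := hpar x 0
            calc (p x * p 0 + q x * q 0) ^ 2
                = (p x ^ 2 + q x ^ 2) * (p 0 ^ 2 + q 0 ^ 2)
                  - (p x * q 0 - q x * p 0) ^ 2 := by ring
              _ = v ^ 2 := by rw [e1, e0, e2]; ring)
          (fun _ => hpos.ne') (Set.mem_univ 0) (by linarith [heik' 0])
        exact fun x => this (Set.mem_univ x)
    intro x
    have h : (p x - p 0) ^ 2 + (q x - q 0) ^ 2 = 0 := by
      linarith [heik' x, heik' 0, hinner x]
    constructor <;> nlinarith [sq_nonneg (p x - p 0), sq_nonneg (q x - q 0)]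
  refine ⟨p 0, q 0, τ 0, heik' 0, hconst, fun x => ?_⟩
  set L : ℝ × ℝ →L[ℝ] ℝ := fderiv ℝ τ 0
  have hfd : ∀ y, fderiv ℝ τ y = L := fun y => by
    refine ContinuousLinearMap.ext fun a => ?_
    rw [hdec (fderiv ℝ τ y), hdec L]
    change _ * p y + _ * q y = _ * p 0 + _ * q 0
    rw [(hconst y).1, (hconst y).2]
  have hd := hτ2.differentiable two_ne_zero
  have h := is_const_of_fderiv_eq_zero (𝕜 := ℝ) (f := fun y => τ y - L y)
    (by fun_prop)
    (fun y => by
      rw [((hd y).hasFDerivAt.fun_sub L.hasFDerivAt).fderiv, hfd y, sub_self]) x 0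
  have hL := hdec L x
  change L x = x.1 * p 0 + x.2 * q 0 at hL
  simp only [map_zero, sub_zero] at h
  linarith
end

section
/- Let 0 < b < 1, a > 0, λ ∈ ℝ, and let θ : ℝ → ℝ be a differentiable function (the angle function evaluated along the circle of radius a). Define h(r, ṙ, t) = (1/2)(1−b²)^{3/2} r² + λ(√(r² + ṙ²) + b(ṙ cos(θ(t) − t) + r sin(θ(t) − t))). Then the constant function r(t) ≡ a satisfies the Euler–Lagrange equation ∂h/∂r − (d/dt)(∂h/∂ṙ) = 0 along (r, ṙ) = (a, 0) if and only if λ(1 + b θ'(t) sin(θ(t) − t)) = −a(1−b²)^{3/2} for all t. In particular, if θ'(t) sin(θ(t) − t) = 0 for all t (e.g. θ ≡ c or θ(t) = t + c), then λ = −a(1−b²)^{3/2} < 0. -/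
/-!
Along the circle `r ≡ a` both partial derivatives of the integrand are explicit. Since `a > 0`, the
square root is smooth near `(a, 0)`, and with `K = (1 - b²)^{3/2}` and `φ(t) = θ(t) - t`,
`∂h/∂r = K a + λ (1 + b sin φ)` and `∂h/∂ṙ = λ b cos φ`. Differentiating the latter in `t`
gives `-λ b sin φ (θ' - 1)`, so the `sin φ` terms free of `θ'` cancel and the Euler–Lagrange
expression is `K a + λ (1 + b θ' sin φ)`. Both claims follow from this one identity, the sign of
`λ` coming from `0 < b < 1`.
-/

/-!
Statement 6: For the Lagrange integrand in polar coordinates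
`h(r, ṙ, t) = (1/2)(1−b²)^{3/2} r² + λ(√(r²+ṙ²) + b(ṙ cos(θ(t)−t) + r sin(θ(t)−t)))`,
the circle `r ≡ a` satisfies the Euler–Lagrange equation along `(r, ṙ) = (a, 0)`
iff `λ(1 + b θ'(t) sin(θ(t)−t)) = −a(1−b²)^{3/2}` for all `t`; in particular, if
`θ'(t) sin(θ(t)−t) = 0` for all `t`, then `λ = −a(1−b²)^{3/2} < 0`.
-/

/-- The Lagrange integrand `h = f + λg` in polar coordinates. -/
noncomputable def hFun (b lam : ℝ) (θ : ℝ → ℝ) (r rdot t : ℝ) : ℝ :=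
  (1 / 2) * (1 - b ^ 2) ^ ((3 : ℝ) / 2) * r ^ 2 +
    lam * (Real.sqrt (r ^ 2 + rdot ^ 2) +
      b * (rdot * Real.cos (θ t - t) + r * Real.sin (θ t - t)))

/-- `∂h/∂r` on the circle of radius `a`. -/
lemma hasDerivAt_hFun_radius (a b lam : ℝ) (ha : 0 < a) (θ : ℝ → ℝ) (t : ℝ) :
    HasDerivAt (fun r => hFun b lam θ r 0 t)
      ((1 - b ^ 2) ^ ((3 : ℝ) / 2) * a + lam * (1 + b * Real.sin (θ t - t))) a := by
  have hpow : HasDerivAt (fun r : ℝ => r ^ 2) (2 * a) a := by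
    simpa using hasDerivAt_pow 2 a
  have hsqrt : HasDerivAt (fun r : ℝ => Real.sqrt (r ^ 2 + 0 ^ 2)) 1 a := by
    have h := (hpow.add_const ((0 : ℝ) ^ 2)).sqrt (by positivity)
    convert h using 1
    have : Real.sqrt (a ^ 2 + 0 ^ 2) = a := by
      simp [Real.sqrt_sq ha.le]
    rw [this]
    field_simp
  have hlin : HasDerivAt
      (fun r : ℝ => b * (0 * Real.cos (θ t - t) + r * Real.sin (θ t - t)))
      (b * (1 * Real.sin (θ t - t))) a :=
    (((hasDerivAt_id a).mul_const _).const_add _).const_mul b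
  have h := (hpow.const_mul ((1 / 2) * (1 - b ^ 2) ^ ((3 : ℝ) / 2))).add
    ((hsqrt.add hlin).const_mul lam)
  refine h.congr_deriv ?_
  ring

/-- `∂h/∂ṙ` on the circle of radius `a`; the square root contributes nothing, being even in `ṙ`. -/
lemma hasDerivAt_hFun_velocity (a b lam : ℝ) (ha : 0 < a) (θ : ℝ → ℝ) (t : ℝ) :
    HasDerivAt (fun rdot => hFun b lam θ a rdot t) (lam * (b * Real.cos (θ t - t))) 0 := by
  have hpow : HasDerivAt (fun v : ℝ => v ^ 2) 0 0 := by
    simpa using hasDerivAt_pow 2 (0 : ℝ)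
  have hsqrt : HasDerivAt (fun v : ℝ => Real.sqrt (a ^ 2 + v ^ 2)) 0 0 := by
    simpa using (hpow.const_add (a ^ 2)).sqrt (by positivity)
  have hlin : HasDerivAt
      (fun v : ℝ => b * (v * Real.cos (θ t - t) + a * Real.sin (θ t - t)))
      (b * (1 * Real.cos (θ t - t))) 0 :=
    (((hasDerivAt_id (0 : ℝ)).mul_const _).add_const _).const_mul b
  have h := ((hsqrt.add hlin).const_mul lam).const_add
    ((1 / 2) * (1 - b ^ 2) ^ ((3 : ℝ) / 2) * a ^ 2)
  refine h.congr_deriv ?_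
  ring

/-- The Euler–Lagrange expression on the circle of radius `a`, in closed form. -/
lemma euler_lagrange_circle_expr (a b lam : ℝ) (ha : 0 < a) (θ : ℝ → ℝ)
    (hθ : Differentiable ℝ θ) (t : ℝ) :
    deriv (fun r => hFun b lam θ r 0 t) a -
        deriv (fun u => deriv (fun rdot => hFun b lam θ a rdot u) 0) t =
      (1 - b ^ 2) ^ ((3 : ℝ) / 2) * a + lam * (1 + b * deriv θ t * Real.sin (θ t - t)) := by
  have hvel : (fun u => deriv (fun rdot => hFun b lam θ a rdot u) 0) =
      fun u => lam * (b * Real.cos (θ u - u)) :=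
    funext fun u => (hasDerivAt_hFun_velocity a b lam ha θ u).deriv
  have htime : HasDerivAt (fun u => lam * (b * Real.cos (θ u - u)))
      (lam * (b * (-Real.sin (θ t - t) * (deriv θ t - 1)))) t :=
    ((((hθ t).hasDerivAt.sub (hasDerivAt_id t)).cos).const_mul b).const_mul lam
  rw [hvel, htime.deriv, (hasDerivAt_hFun_radius a b lam ha θ t).deriv]
  ring

theorem euler_lagrange_circle_iff_lambda_eq
    (a b lam : ℝ) (ha : 0 < a) (hb0 : 0 < b) (hb1 : b < 1)
    (θ : ℝ → ℝ) (hθ : Differentiable ℝ θ) :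
    ((∀ t : ℝ,
        deriv (fun r => hFun b lam θ r 0 t) a -
          deriv (fun u => deriv (fun rdot => hFun b lam θ a rdot u) 0) t = 0) ↔
      (∀ t : ℝ,
        lam * (1 + b * deriv θ t * Real.sin (θ t - t))
          = -a * (1 - b ^ 2) ^ ((3 : ℝ) / 2))) ∧
    ((∀ t : ℝ, deriv θ t * Real.sin (θ t - t) = 0) →
      (∀ t : ℝ,
        deriv (fun r => hFun b lam θ r 0 t) a -
          deriv (fun u => deriv (fun rdot => hFun b lam θ a rdot u) 0) t = 0) →
      lam = -a * (1 - b ^ 2) ^ ((3 : ℝ) / 2) ∧ lam < 0) := by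
  simp only [euler_lagrange_circle_expr a b lam ha θ hθ]
  refine ⟨forall_congr' fun t => ?_, fun hzero hEL => ?_⟩
  · constructor <;> intro h <;> linarith
  · have hlam : lam = -a * (1 - b ^ 2) ^ ((3 : ℝ) / 2) := by
      linear_combination hEL 0 - lam * b * hzero 0
    have hK : 0 < (1 - b ^ 2) ^ ((3 : ℝ) / 2) := Real.rpow_pos_of_pos (by nlinarith) _
    refine ⟨hlam, ?_⟩
    rw [hlam]
    linarith [mul_pos ha hK]
end

section
/- For every real number s with 0 < s < 2π, one has s·sin s + 2 cos s − 2 < 0; in particular the determinant expression (t₁ − t₀) sin(t₁ − t₀) + 2 cos(t₁ − t₀) − 2 vanishes for t₀, t₁ with 0 ≤ t₁ − t₀ < 2π if and only if t₁ = t₀. -/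
/-!
With `u = s / 2 ∈ (0, π)`, the double-angle formulas give
`s sin s + 2 cos s - 2 = 4 sin u (u cos u - sin u)`. Here `sin u > 0`, and `u cos u < sin u`:
for `u < π / 2` this is `u < tan u`, and for `u ≥ π / 2` the left side is nonpositive.
-/

theorem mul_cos_lt_sin {u : ℝ} (h0 : 0 < u) (hpi : u < Real.pi) :
    u * Real.cos u < Real.sin u := by
  rcases lt_or_ge u (Real.pi / 2) with h | h
  · have hc : 0 < Real.cos u := Real.cos_pos_of_mem_Ioo ⟨by linarith, h⟩
    have ht := Real.lt_tan h0 h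
    rwa [Real.tan_eq_sin_div_cos, lt_div_iff₀ hc] at ht
  · have hc : Real.cos u ≤ 0 := Real.cos_nonpos_of_pi_div_two_le_of_le h (by linarith)
    have hs : 0 < Real.sin u := Real.sin_pos_of_pos_of_lt_pi h0 hpi
    exact (mul_nonpos_of_nonneg_of_nonpos h0.le hc).trans_lt hs

/-!
Statement 12: For `0 < s < 2π` one has `s sin s + 2 cos s − 2 < 0`; consequently, for
`0 ≤ t₁ − t₀ < 2π`, the determinant expression
`(t₁−t₀) sin(t₁−t₀) + 2 cos(t₁−t₀) − 2` vanishes iff `t₁ = t₀`.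
-/

theorem conjugate_point_determinant_negative :
    (∀ s : ℝ, 0 < s → s < 2 * Real.pi →
      s * Real.sin s + 2 * Real.cos s - 2 < 0) ∧
    (∀ t₀ t₁ : ℝ, 0 ≤ t₁ - t₀ → t₁ - t₀ < 2 * Real.pi →
      ((t₁ - t₀) * Real.sin (t₁ - t₀) + 2 * Real.cos (t₁ - t₀) - 2 = 0 ↔
        t₁ = t₀)) := by
  have key : ∀ s : ℝ, 0 < s → s < 2 * Real.pi →
      s * Real.sin s + 2 * Real.cos s - 2 < 0 := by
    intro s h0 h2
    obtain ⟨u, rfl⟩ : ∃ u, s = 2 * u := ⟨s / 2, by ring⟩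
    have hu0 : 0 < u := by linarith
    have hupi : u < Real.pi := by linarith
    have hs : 0 < Real.sin u := Real.sin_pos_of_pos_of_lt_pi hu0 hupi
    have hprod := mul_pos hs (sub_pos.2 (mul_cos_lt_sin hu0 hupi))
    rw [Real.sin_two_mul, Real.cos_two_mul]
    nlinarith [Real.sin_sq_add_cos_sq u]
  refine ⟨key, fun t₀ t₁ h0 h2 => ⟨fun h => ?_, fun h => by simp [h]⟩⟩
  by_contra hne
  exact (key _ (h0.lt_of_ne' (sub_ne_zero.2 hne)) h2).ne h
end

section
/- Let t₀, t₁ ∈ ℝ with t₀ < t₁ and t₁ − t₀ < 2π. Suppose c₁, c₂, d ∈ ℝ are such that the function ω(t) = c₁ cos t + c₂ sin t + d satisfies ω(t₀) = 0, ω(t₁) = 0, and ∫_{t₀}^{t₁} ω(t) dt = 0. Then c₁ = c₂ = d = 0, i.e. ω is identically zero. -/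
/-!
Let `m` be the midpoint and `h ∈ (0, π)` the half-length of `[t₀, t₁]`, and write
`ω(m + s) = A cos s + B sin s + d`. The two boundary conditions at `s = ± h` give
`B sin h = 0` and `A cos h + d = 0`, and the integral condition gives `A sin h + d h = 0`.
As `sin h > 0`, the first yields `B = 0`; eliminating `d` from the other two yields
`A (sin h - h cos h) = 0`, and `h cos h < sin h` on `(0, π)`. So `A = B = d = 0`, and `c₁`, `c₂`
are recovered from `A`, `B` by a rotation through the angle `m`.
-/

/-- Equivalent to `h < tan h` before `π / 2`; from there on the left side is not positive. -/
lemma mul_cos_lt_sin_of_lt_pi {h : ℝ} (h0 : 0 < h) (hpi : h < Real.pi) :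
    h * Real.cos h < Real.sin h := by
  rcases lt_or_ge h (Real.pi / 2) with hlt | hge
  · have hc : 0 < Real.cos h := Real.cos_pos_of_mem_Ioo ⟨by linarith, hlt⟩
    have ht := Real.lt_tan h0 hlt
    rwa [Real.tan_eq_sin_div_cos, lt_div_iff₀ hc] at ht
  · have hc : Real.cos h ≤ 0 := Real.cos_nonpos_of_pi_div_two_le_of_le hge (by linarith)
    have hs := Real.sin_pos_of_pos_of_lt_pi h0 hpi
    nlinarith

lemma integral_trig_affine (t₀ t₁ c₁ c₂ d : ℝ) :
    (∫ t in t₀..t₁, (c₁ * Real.cos t + c₂ * Real.sin t + d)) =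
      c₁ * (Real.sin t₁ - Real.sin t₀) + c₂ * (Real.cos t₀ - Real.cos t₁) + d * (t₁ - t₀) := by
  rw [intervalIntegral.integral_add (Continuous.intervalIntegrable (by fun_prop) _ _)
      (Continuous.intervalIntegrable (by fun_prop) _ _),
    intervalIntegral.integral_add (Continuous.intervalIntegrable (by fun_prop) _ _)
      (Continuous.intervalIntegrable (by fun_prop) _ _),
    intervalIntegral.integral_const_mul, intervalIntegral.integral_const_mul,
    integral_cos, integral_sin, intervalIntegral.integral_const, smul_eq_mul]
  ring

theorem no_conjugate_points_on_extremal_circle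
    (t₀ t₁ c₁ c₂ d : ℝ) (h01 : t₀ < t₁) (hlt : t₁ - t₀ < 2 * Real.pi)
    (hω₀ : c₁ * Real.cos t₀ + c₂ * Real.sin t₀ + d = 0)
    (hω₁ : c₁ * Real.cos t₁ + c₂ * Real.sin t₁ + d = 0)
    (hint : (∫ t in t₀..t₁, (c₁ * Real.cos t + c₂ * Real.sin t + d)) = 0) :
    c₁ = 0 ∧ c₂ = 0 ∧ d = 0 := by
  rw [integral_trig_affine] at hint
  obtain ⟨m, h, rfl, rfl⟩ : ∃ m h : ℝ, t₀ = m - h ∧ t₁ = m + h :=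
    ⟨(t₀ + t₁) / 2, (t₁ - t₀) / 2, by ring, by ring⟩
  have h0 : 0 < h := by linarith
  have hpi : h < Real.pi := by linarith
  have hs := Real.sin_pos_of_pos_of_lt_pi h0 hpi
  have hlt' := mul_cos_lt_sin_of_lt_pi h0 hpi
  simp only [Real.cos_add, Real.sin_add, Real.cos_sub, Real.sin_sub] at hω₀ hω₁ hint
  have hB : c₂ * Real.cos m - c₁ * Real.sin m = 0 := by
    have : (c₂ * Real.cos m - c₁ * Real.sin m) * Real.sin h = 0 := by linarith
    exact (mul_eq_zero.mp this).resolve_right hs.ne'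
  have hAd : (c₁ * Real.cos m + c₂ * Real.sin m) * Real.cos h + d = 0 := by linarith
  have hA : c₁ * Real.cos m + c₂ * Real.sin m = 0 := by
    have : (c₁ * Real.cos m + c₂ * Real.sin m) * (Real.sin h - h * Real.cos h) = 0 := by
      linear_combination hint / 2 - h * hAd
    exact (mul_eq_zero.mp this).resolve_right (by linarith)
  have hm := Real.sin_sq_add_cos_sq m
  refine ⟨?_, ?_, ?_⟩
  · linear_combination Real.cos m * hA - Real.sin m * hB - c₁ * hm
  · linear_combination Real.sin m * hA + Real.cos m * hB - c₂ * hm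
  · linear_combination hAd - Real.cos h * hA
end
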